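/- Let (E,d_E) be a separable metric space, let p ≥ 1, let μ ∈ 𝒫_p(E) and let n ∈ ℕ. Then (𝔼[W_p(μ_n, μ)^p])^{1/p} ≤ 5 · ∑_{k=0}^{⌊log₂ n⌋} (2^k/n)^{1/(2p)} · b_{2^k,p}(μ), where μ_n is the empirical measure of μ with sample size n. -/

import Mathlib

open MeasureTheory ENNReal Filter

noncomputable section

/-- The `p`-Wasserstein distance between two measures on a metric space, as an
extended nonnegative real: the infimum over all couplings `γ` (measures on `E × E`
with the prescribed marginals) of `(∫ d(x,y)^p dγ)^(1/p)`. -/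
def Wp {E : Type*} [MetricSpace E] [MeasurableSpace E] (p : ℝ) (μ ν : Measure E) : ℝ≥0∞ :=
  ⨅ γ ∈ {γ : Measure (E × E) | γ.map Prod.fst = μ ∧ γ.map Prod.snd = ν},
    (∫⁻ z, edist z.1 z.2 ^ p ∂γ) ^ (1 / p)

/-- The (uniform) discrete measure `(1/n) ∑ δ_{X i}`. -/
def empiricalMeasure {E : Type*} [MeasurableSpace E] (n : ℕ) (X : Fin n → E) : Measure E :=
  (n : ℝ≥0∞)⁻¹ • ∑ i, Measure.dirac (X i)

/-- The law of `n` independent samples of `μ`. -/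
def sampleMeasure {E : Type*} [MeasurableSpace E] (μ : Measure E) (n : ℕ) :
    Measure (Fin n → E) :=
  Measure.pi fun _ => μ

/-- `𝔼[W_p(μ_n, μ)]`, where `μ_n` is the empirical measure of `μ` with sample size `n`. -/
def expWp {E : Type*} [MetricSpace E] [MeasurableSpace E] (p : ℝ) (μ : Measure E) (n : ℕ) :
    ℝ≥0∞ :=
  ∫⁻ X, Wp p (empiricalMeasure n X) μ ∂(sampleMeasure μ n)

/-- `(𝔼[W_p(μ_n, μ)^p])^{1/p}`, where `μ_n` is the empirical measure of `μ` with
sample size `n`. -/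
def expWpPow {E : Type*} [MetricSpace E] [MeasurableSpace E] (p : ℝ) (μ : Measure E) (n : ℕ) :
    ℝ≥0∞ :=
  (∫⁻ X, (Wp p (empiricalMeasure n X) μ) ^ p ∂(sampleMeasure μ n)) ^ (1 / p)

/-- The optimal uniform quantization error
`b_{n,p}(μ) = inf_{x₁,…,x_n} W_p(μ, (1/n) ∑ δ_{x_i})`. -/
def unifQuantErr {E : Type*} [MetricSpace E] [MeasurableSpace E] (p : ℝ) (n : ℕ)
    (μ : Measure E) : ℝ≥0∞ :=
  ⨅ x : Fin n → E, Wp p μ (empiricalMeasure n x)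

/-- The optimal quantization error `e_{n,p}(μ)`: the infimum of `W_p(μ, ν)` over all
probability measures `ν` supported on at most `n` points. -/
def quantErr {E : Type*} [MetricSpace E] [MeasurableSpace E] (p : ℝ) (n : ℕ)
    (μ : Measure E) : ℝ≥0∞ :=
  ⨅ ν ∈ {ν : Measure E | IsProbabilityMeasure ν ∧
      ∃ S : Finset E, S.card ≤ n ∧ ν (↑S : Set E)ᶜ = 0}, Wp p μ ν

/-- `μ` has a finite `p`-th moment: `∫ d(x, x₀)^p dμ(x) < ∞` for some `x₀`. -/
def HasFiniteMoment {E : Type*} [MetricSpace E] [MeasurableSpace E] (p : ℝ)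
    (μ : Measure E) : Prop :=
  ∃ x₀ : E, ∫⁻ x, edist x x₀ ^ p ∂μ ≠ ∞

end

/-! Fix quantizers `x k` with `2 ^ k` equally weighted points, nearly optimal for `μ`, and kernels
`g : E → Fin (2 ^ K)` and `η k : E → Fin (2 ^ k)` obtained from nearly optimal couplings of `μ` with
the quantizer at the finest scale `K`, and of the quantizer at scale `k + 1` with the one at scale
`k`. Transporting `μ_n` along `g`, and `μ` to its quantizer at scale `K`, costs at most twice the
error at that scale. It remains to compare the distribution of the labels that `g` gives to the
sample with the uniform distribution.

The mass these two share stays in place; the rest is pushed along `η` to the next coarser scale,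
where mass may cancel again, until a single label is left and nothing remains to be transported.
Before cancellation, the label distribution at scale `k` is the image of `μ_n` under a kernel that
maps `μ` to the uniform distribution, so each label has probability `2 ^ (-k)` and, by the variance
bound for an empirical mean, an expected unmatched mass of at most `(2 ^ (-k) / n) ^ (1 / 2)`. Hence
the `p`-th power of the cost of leaving scale `k` is at most `(2 ^ k / n) ^ (1 / 2)` times the
`p`-th power of the cost of the coupling. -/

open ProbabilityTheory

section Minkowski

variable {α : Type*} [MeasurableSpace α]

-- Needed because `X ↦ Wp p (empiricalMeasure n X) μ` is not known to be measurable. The idea is to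
-- replace `(f + g) ^ p` by a measurable minorant `h` with the same integral, and `g` by
-- `h ^ (1 / p) - f`, which is measurable and at most `g`.
theorem lintegral_Lp_add_le_of_measurable_left {μ : Measure α} {p : ℝ} (hp : 1 ≤ p)
    {f : α → ℝ≥0∞} (hf : Measurable f) (g : α → ℝ≥0∞) :
    (∫⁻ a, (f a + g a) ^ p ∂μ) ^ (1 / p) ≤
      (∫⁻ a, f a ^ p ∂μ) ^ (1 / p) + (∫⁻ a, g a ^ p ∂μ) ^ (1 / p) := by
  have hp0 : 0 < p := by positivity
  obtain ⟨h, hh, hle, heq⟩ := exists_measurable_le_lintegral_eq μ fun a => (f a + g a) ^ p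
  set r : α → ℝ≥0∞ := fun a => h a ^ (1 / p) - f a
  have hr : Measurable r := (hh.pow_const _).sub hf
  have hrg (a : α) : r a ≤ g a := by
    refine tsub_le_iff_left.2 ?_
    simpa [← ENNReal.rpow_mul, hp0.ne'] using
      ENNReal.rpow_le_rpow (hle a) (one_div_nonneg.2 hp0.le)
  have hhr (a : α) : h a ≤ (f a + r a) ^ p := by
    simpa [r, ← ENNReal.rpow_mul, hp0.ne'] using
      ENNReal.rpow_le_rpow (le_add_tsub : h a ^ (1 / p) ≤ f a + r a) hp0.le
  calc (∫⁻ a, (f a + g a) ^ p ∂μ) ^ (1 / p)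
      ≤ (∫⁻ a, (f a + r a) ^ p ∂μ) ^ (1 / p) := by rw [heq]; gcongr with a; exact hhr a
    _ ≤ (∫⁻ a, f a ^ p ∂μ) ^ (1 / p) + (∫⁻ a, r a ^ p ∂μ) ^ (1 / p) :=
      ENNReal.lintegral_Lp_add_le hf.aemeasurable hr.aemeasurable hp
    _ ≤ _ := by gcongr with a; exact hrg a

theorem lintegral_const_mul_rpow_one_div_rpow {p : ℝ} (hp : 0 < p) (μ : Measure α) (c : ℝ≥0∞)
    {f : α → ℝ≥0∞} (hf : Measurable f) :
    (∫⁻ a, (c * f a ^ (1 / p)) ^ p ∂μ) ^ (1 / p) = c * (∫⁻ a, f a ∂μ) ^ (1 / p) := by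
  simp_rw [ENNReal.mul_rpow_of_nonneg _ _ hp.le, ← ENNReal.rpow_mul, one_div_mul_cancel hp.ne',
    ENNReal.rpow_one]
  rw [lintegral_const_mul _ hf, ENNReal.mul_rpow_of_nonneg _ _ (by positivity),
    ← ENNReal.rpow_mul, mul_one_div_cancel hp.ne', ENNReal.rpow_one]

end Minkowski

section Gluing

variable {α β δ ι : Type*} [MeasurableSpace α] [MeasurableSpace β] [MeasurableSpace δ]
  [MeasurableSpace ι]

theorem exists_measure_glue [StandardBorelSpace δ] [Nonempty δ] (γ₁ : Measure (α × β))
    (γ₂ : Measure (β × δ)) [IsFiniteMeasure γ₁] [IsFiniteMeasure γ₂] (h : γ₁.snd = γ₂.fst) :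
    ∃ Γ : Measure ((α × β) × δ), Γ.fst = γ₁ ∧ Γ.map (Prod.map Prod.snd id) = γ₂ := by
  refine ⟨γ₁ ⊗ₘ γ₂.condKernel.comap Prod.snd measurable_snd, Measure.fst_compProd .., ?_⟩
  conv_rhs => rw [← γ₂.disintegrate γ₂.condKernel, ← h]
  ext s hs
  rw [Measure.map_apply (by fun_prop) hs, Measure.compProd_apply (by measurability),
    Measure.compProd_apply hs, Measure.snd,
    lintegral_map (Kernel.measurable_kernel_prodMk_left hs) measurable_snd]
  rfl

-- `E` need not be standard Borel, so couplings cannot be disintegrated over points of `E`. Lifting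
-- them to the labels `ι` of a discrete measure makes disintegration available.
theorem exists_lift_of_snd_eq_map [MeasurableEq β] [StandardBorelSpace ι] [Nonempty ι]
    (γ : Measure (α × β)) (u : Measure ι) [IsFiniteMeasure u] {x : ι → β} (hx : Measurable x)
    (h : γ.snd = u.map x) :
    ∃ π : Measure (α × ι), π.snd = u ∧ π.map (Prod.map id x) = γ := by
  have : IsFiniteMeasure (γ.map Prod.snd) := by rw [← Measure.snd, h]; infer_instance
  have : IsFiniteMeasure γ := Measure.isFiniteMeasure_of_map measurable_snd.aemeasurable
  have hgraph : Measurable fun i => (x i, i) := by fun_prop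
  obtain ⟨Γ, hΓ₁, hΓ₂⟩ := exists_measure_glue γ (u.map fun i => (x i, i)) <| by
    rw [h, Measure.fst, Measure.map_map measurable_fst hgraph]; rfl
  have hlabel : ∀ᵐ z ∂Γ, x z.2 = z.1.2 := by
    refine ae_of_ae_map (f := Prod.map Prod.snd id) (p := fun w => x w.2 = w.1) (by fun_prop) ?_
    rw [hΓ₂, ae_map_iff hgraph.aemeasurable (measurableSet_eq_fun (by fun_prop) (by fun_prop))]
    simp
  refine ⟨Γ.map (Prod.map Prod.fst id), ?_, ?_⟩
  · rw [Measure.snd, Measure.map_map measurable_snd (by fun_prop)]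
    calc Γ.map Prod.snd = (Γ.map (Prod.map Prod.snd id)).map Prod.snd := by
          rw [Measure.map_map measurable_snd (by fun_prop)]; rfl
      _ = u := by rw [hΓ₂, Measure.map_map measurable_snd hgraph]; exact Measure.map_id
  · rw [Measure.map_map (by fun_prop) (by fun_prop), ← hΓ₁, Measure.fst]
    exact Measure.map_congr (hlabel.mono fun z hz => Prod.ext rfl hz)

end Gluing

section Wasserstein

variable {E : Type*} [MetricSpace E] [MeasurableSpace E] {p : ℝ} {μ ν : Measure E}

theorem Wp_le_of_coupling (p : ℝ) {γ : Measure (E × E)} (h₁ : γ.map Prod.fst = μ)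
    (h₂ : γ.map Prod.snd = ν) : Wp p μ ν ≤ (∫⁻ z, edist z.1 z.2 ^ p ∂γ) ^ (1 / p) :=
  iInf₂_le γ ⟨h₁, h₂⟩

theorem Wp_lt_iff {c : ℝ≥0∞} : Wp p μ ν < c ↔ ∃ γ : Measure (E × E), γ.map Prod.fst = μ ∧
    γ.map Prod.snd = ν ∧ (∫⁻ z, edist z.1 z.2 ^ p ∂γ) ^ (1 / p) < c := by
  simp [Wp, iInf_lt_iff, and_assoc]

variable [SecondCountableTopology E] [BorelSpace E]

theorem Wp_comm (p : ℝ) (μ ν : Measure E) : Wp p μ ν = Wp p ν μ := by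
  suffices H : ∀ μ ν : Measure E, Wp p μ ν ≤ Wp p ν μ from le_antisymm (H μ ν) (H ν μ)
  intro μ ν
  refine le_iInf₂ fun γ hγ => ?_
  refine (Wp_le_of_coupling p (γ := γ.map Prod.swap) ?_ ?_).trans_eq ?_
  · rw [Measure.map_map measurable_fst measurable_swap]; exact hγ.2
  · rw [Measure.map_map measurable_snd measurable_swap]; exact hγ.1
  · rw [lintegral_map (by fun_prop) measurable_swap]
    simp only [Prod.fst_swap, Prod.snd_swap, edist_comm]

theorem Wp_map_map_le {α : Type*} [MeasurableSpace α] (p : ℝ) (ρ : Measure α) {f g : α → E}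
    (hf : Measurable f) (hg : Measurable g) :
    Wp p (ρ.map f) (ρ.map g) ≤ (∫⁻ a, edist (f a) (g a) ^ p ∂ρ) ^ (1 / p) := by
  have hfg : Measurable fun a => (f a, g a) := hf.prodMk hg
  refine (Wp_le_of_coupling p (γ := ρ.map fun a => (f a, g a)) ?_ ?_).trans_eq ?_
  · rw [Measure.map_map measurable_fst hfg]; rfl
  · rw [Measure.map_map measurable_snd hfg]; rfl
  · rw [lintegral_map (by fun_prop) hfg]

theorem Wp_self (hp : 0 < p) (μ : Measure E) : Wp p μ μ = 0 := by
  simpa [hp] using Wp_map_map_le p μ measurable_id measurable_id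

theorem Wp_add_left_le (hp : 0 < p) (m μ ν : Measure E) : Wp p (m + μ) (m + ν) ≤ Wp p μ ν := by
  refine le_iInf₂ fun γ hγ => ?_
  have hdiag : Measurable fun e : E => (e, e) := by fun_prop
  refine (Wp_le_of_coupling p (γ := m.map (fun e => (e, e)) + γ) ?_ ?_).trans_eq ?_
  · rw [Measure.map_add _ _ measurable_fst, Measure.map_map measurable_fst hdiag, hγ.1]
    exact congrArg (· + μ) Measure.map_id
  · rw [Measure.map_add _ _ measurable_snd, Measure.map_map measurable_snd hdiag, hγ.2]
    exact congrArg (· + ν) Measure.map_id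
  · rw [lintegral_add_measure, lintegral_map (by fun_prop) hdiag]
    simp [hp]

variable {ι : Type*} [MeasurableSpace ι] [StandardBorelSpace ι] [Nonempty ι]

theorem Wp_triangle_map_right (hp : 1 ≤ p) (μ ν : Measure E) [IsFiniteMeasure ν] (u : Measure ι)
    [IsFiniteMeasure u] {x : ι → E} (hx : Measurable x) :
    Wp p μ (u.map x) ≤ Wp p μ ν + Wp p ν (u.map x) := by
  refine ENNReal.le_iInf₂_add_iInf₂ fun γ₁ h₁ γ₂ h₂ => ?_
  obtain ⟨π, hπ₁, hπ₂⟩ := exists_lift_of_snd_eq_map γ₂ u hx h₂.2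
  have : IsFiniteMeasure (γ₁.map Prod.snd) := by rw [h₁.2]; infer_instance
  have : IsFiniteMeasure γ₁ := Measure.isFiniteMeasure_of_map measurable_snd.aemeasurable
  have : IsFiniteMeasure (π.map Prod.snd) := by rw [← Measure.snd, hπ₁]; infer_instance
  have : IsFiniteMeasure π := Measure.isFiniteMeasure_of_map measurable_snd.aemeasurable
  obtain ⟨Γ, hΓ₁, hΓ₂⟩ := exists_measure_glue γ₁ π <| by
    calc γ₁.snd = ν := h₁.2
      _ = γ₂.map Prod.fst := h₂.1.symm
      _ = π.fst := by
        rw [← hπ₂, Measure.map_map measurable_fst (by fun_prop)]; rfl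
  have hμ : Γ.map (fun z => z.1.1) = μ := by
    rw [← h₁.1, ← hΓ₁, Measure.fst, Measure.map_map measurable_fst measurable_fst]; rfl
  have hu : Γ.map (fun z => x z.2) = u.map x := by
    rw [← hπ₁, ← hΓ₂, Measure.snd, Measure.map_map measurable_snd (by fun_prop),
      Measure.map_map hx (by fun_prop)]; rfl
  calc Wp p μ (u.map x)
      ≤ (∫⁻ z, edist z.1.1 (x z.2) ^ p ∂Γ) ^ (1 / p) := by
        rw [← hμ, ← hu]; exact Wp_map_map_le p Γ (by fun_prop) (by fun_prop)
    _ ≤ (∫⁻ z, (edist z.1.1 z.1.2 + edist z.1.2 (x z.2)) ^ p ∂Γ) ^ (1 / p) := by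
        gcongr; exact edist_triangle ..
    _ ≤ (∫⁻ z, edist z.1.1 z.1.2 ^ p ∂Γ) ^ (1 / p)
          + (∫⁻ z, edist z.1.2 (x z.2) ^ p ∂Γ) ^ (1 / p) :=
        ENNReal.lintegral_Lp_add_le (by fun_prop) (by fun_prop) hp
    _ = (∫⁻ w, edist w.1 w.2 ^ p ∂γ₁) ^ (1 / p) + (∫⁻ w, edist w.1 w.2 ^ p ∂γ₂) ^ (1 / p) := by
        rw [← hΓ₁, ← hπ₂, ← hΓ₂, Measure.fst, lintegral_map (by fun_prop) measurable_fst,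
          Measure.map_map (by fun_prop) (by fun_prop),
          lintegral_map (by fun_prop) (by fun_prop)]
        rfl

theorem Wp_triangle_map_left (hp : 1 ≤ p) (u : Measure ι) [IsFiniteMeasure u] {x : ι → E}
    (hx : Measurable x) (μ ν : Measure E) [IsFiniteMeasure μ] :
    Wp p (u.map x) ν ≤ Wp p (u.map x) μ + Wp p μ ν := by
  rw [Wp_comm p (u.map x) ν, Wp_comm p (u.map x) μ, Wp_comm p μ ν, add_comm]
  exact Wp_triangle_map_right hp ν μ u hx

end Wasserstein

section MeasureSub

variable {α : Type*} [MeasurableSpace α]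

theorem measure_add_sub_add_left (m a b : Measure α) [IsFiniteMeasure m] [IsFiniteMeasure a]
    [IsFiniteMeasure b] : (m + a) - (m + b) = a - b := by
  refine eq_of_forall_ge_iff fun ξ => ?_
  rw [Measure.sub_le_iff_le_add, Measure.sub_le_iff_le_add, add_left_comm]
  refine ⟨fun h => Measure.le_intro fun s _ _ => ?_, fun h => by gcongr⟩
  exact (ENNReal.add_le_add_iff_left (measure_ne_top m s)).1 (by simpa using h s)

theorem exists_add_sub_eq (a b : Measure α) [IsFiniteMeasure a] [IsFiniteMeasure b] :
    ∃ m : Measure α, IsFiniteMeasure m ∧ m + (a - b) = a ∧ m + (b - a) = b := by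
  have hm : a - (a - b) + (a - b) = a := Measure.sub_add_cancel_of_le Measure.sub_le
  have hsub := Measure.sub_toSignedMeasure_eq_toSignedMeasure_sub (μ := a) (ν := b)
  have ha := Measure.toSignedMeasure_congr hm
  refine ⟨a - (a - b), inferInstance, hm, Measure.toSignedMeasure_eq_toSignedMeasure_iff.1 ?_⟩
  rw [Measure.toSignedMeasure_add] at ha ⊢
  linear_combination (norm := abel) ha + hsub

theorem measure_sub_apply_singleton [MeasurableSingletonClass α] (a b : Measure α)
    [IsFiniteMeasure b] (i : α) : (a - b) {i} = a {i} - b {i} := by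
  have hi := measurableSet_singleton i
  obtain h | h := le_total (a {i}) (b {i})
  · rw [tsub_eq_zero_of_le h]
    refine Measure.sub_apply_eq_zero_of_restrict_le_restrict ?_ hi
    simp only [Measure.restrict_singleton]
    gcongr
  · rw [← Measure.restrict_apply_self, Measure.restrict_sub_eq_restrict_sub_restrict hi,
      Measure.sub_apply hi]
    · simp only [Measure.restrict_apply_self]
    · simp only [Measure.restrict_singleton]
      gcongr

end MeasureSub

section Assignment

variable {E κ : Type*} [MetricSpace E] [MeasurableSpace E] [SecondCountableTopology E]
  [BorelSpace E] [MeasurableSpace κ] {p : ℝ} {y : κ → E}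

/-- The local transport cost of a kernel `η` with sites `y`: the integral of `d(e, y j)^p` over the
labels `j` to which `η` assigns the point `e`. -/
noncomputable def assignCost (p : ℝ) (η : Kernel E κ) (y : κ → E) (e : E) : ℝ≥0∞ :=
  ∫⁻ j, edist e (y j) ^ p ∂η e

theorem measurable_assignCost (p : ℝ) (η : Kernel E κ) [IsSFiniteKernel η] (hy : Measurable y) :
    Measurable (assignCost p η y) :=
  Measurable.lintegral_kernel_prod_right' (f := fun z => edist z.1 (y z.2) ^ p) (by fun_prop)

theorem lintegral_assignCost (p : ℝ) (ρ : Measure E) [SFinite ρ] (η : Kernel E κ)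
    [IsSFiniteKernel η] (hy : Measurable y) :
    ∫⁻ e, assignCost p η y e ∂ρ = ∫⁻ z, edist z.1 (y z.2) ^ p ∂(ρ ⊗ₘ η) :=
  (Measure.lintegral_compProd (f := fun z => edist z.1 (y z.2) ^ p) (by fun_prop)).symm

theorem Wp_map_comp_le (p : ℝ) (ρ : Measure E) [SFinite ρ] (η : Kernel E κ) [IsMarkovKernel η]
    (hy : Measurable y) :
    Wp p ρ ((η ∘ₘ ρ).map y) ≤ (∫⁻ e, assignCost p η y e ∂ρ) ^ (1 / p) := by
  have hfst : (ρ ⊗ₘ η).map Prod.fst = ρ := Measure.fst_compProd ..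
  have hsnd : (ρ ⊗ₘ η).map (fun z => y z.2) = (η ∘ₘ ρ).map y := by
    rw [← Measure.snd_compProd, Measure.snd, Measure.map_map hy measurable_snd]; rfl
  calc Wp p ρ ((η ∘ₘ ρ).map y)
      = Wp p ((ρ ⊗ₘ η).map Prod.fst) ((ρ ⊗ₘ η).map fun z => y z.2) := by rw [hfst, hsnd]
    _ ≤ (∫⁻ z, edist z.1 (y z.2) ^ p ∂(ρ ⊗ₘ η)) ^ (1 / p) :=
      Wp_map_map_le p _ measurable_fst (by fun_prop)
    _ = (∫⁻ e, assignCost p η y e ∂ρ) ^ (1 / p) := by rw [lintegral_assignCost p ρ η hy]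

theorem exists_assignCost_lt_of_Wp_lt [StandardBorelSpace κ] [Nonempty κ] {μ : Measure E}
    {v : Measure κ} [IsFiniteMeasure v] (hy : Measurable y) {c : ℝ≥0∞}
    (h : Wp p μ (v.map y) < c) :
    ∃ η : Kernel E κ, IsMarkovKernel η ∧ η ∘ₘ μ = v ∧
      (∫⁻ e, assignCost p η y e ∂μ) ^ (1 / p) < c := by
  obtain ⟨γ, h₁, h₂, hγ⟩ := Wp_lt_iff.1 h
  obtain ⟨π, hπ, rfl⟩ := exists_lift_of_snd_eq_map γ v hy h₂
  have : IsFiniteMeasure (π.map Prod.snd) := by rw [← Measure.snd, hπ]; infer_instance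
  have : IsFiniteMeasure π := Measure.isFiniteMeasure_of_map measurable_snd.aemeasurable
  have hπμ : π.fst = μ := by
    rw [← h₁, Measure.map_map measurable_fst (by fun_prop)]; rfl
  have hdis : μ ⊗ₘ π.condKernel = π := hπμ ▸ π.disintegrate π.condKernel
  have : IsFiniteMeasure μ := hπμ ▸ inferInstance
  refine ⟨π.condKernel, inferInstance, by rw [← Measure.snd_compProd, hdis, hπ], ?_⟩
  rw [lintegral_assignCost p μ _ hy, hdis]
  rwa [lintegral_map (by fun_prop) (by fun_prop)] at hγ

end Assignment

section Residual

variable {E ι κ : Type*} [MetricSpace E] [MeasurableSpace E] [MeasurableSpace ι]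
  [MeasurableSpace κ] {p : ℝ} {x : ι → E} {y : κ → E}

/-- The cost of transporting the part of `a` that is not shared with `b` onto the part of `b` that
is not shared with `a`, when a label `i` stands for the point `x i`. -/
noncomputable def residualWp (p : ℝ) (x : ι → E) (a b : Measure ι) : ℝ≥0∞ :=
  Wp p ((a - b).map x) ((b - a).map x)

theorem residualWp_congr {a b s t m : Measure ι} [IsFiniteMeasure m] [IsFiniteMeasure s]
    [IsFiniteMeasure t] (ha : m + s = a) (hb : m + t = b) :
    residualWp p x a b = residualWp p x s t := by
  simp only [residualWp, ← ha, ← hb, measure_add_sub_add_left]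

variable [SecondCountableTopology E] [BorelSpace E]

theorem residualWp_self (hp : 0 < p) (x : ι → E) (a : Measure ι) : residualWp p x a a = 0 :=
  Wp_self hp _

theorem Wp_map_map_le_residualWp (hp : 0 < p) (hx : Measurable x) (a b : Measure ι)
    [IsFiniteMeasure a] [IsFiniteMeasure b] : Wp p (a.map x) (b.map x) ≤ residualWp p x a b := by
  obtain ⟨m, -, ha, hb⟩ := exists_add_sub_eq a b
  calc Wp p (a.map x) (b.map x)
      = Wp p (m.map x + (a - b).map x) (m.map x + (b - a).map x) := by
        rw [← Measure.map_add _ _ hx, ← Measure.map_add _ _ hx, ha, hb]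
    _ ≤ residualWp p x a b := Wp_add_left_le hp _ _ _

variable [StandardBorelSpace ι] [Nonempty ι]

theorem residualWp_le_add (hp : 1 ≤ p) (hx : Measurable x) (hy : Measurable y) (η : Kernel E κ)
    [IsMarkovKernel η] (a b : Measure ι) [IsFiniteMeasure a] [IsFiniteMeasure b] :
    residualWp p x a b ≤ 2 * (∫⁻ i, assignCost p η y (x i) ∂(a - b + (b - a))) ^ (1 / p)
      + residualWp p y (η ∘ₘ a.map x) (η ∘ₘ b.map x) := by
  obtain ⟨m, _, ha, hb⟩ := exists_add_sub_eq a b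
  set s := a - b
  set t := b - a
  have hcost (r : Measure ι) [IsFiniteMeasure r] (hr : r ≤ s + t) :
      Wp p (r.map x) ((η ∘ₘ r.map x).map y) ≤
        (∫⁻ i, assignCost p η y (x i) ∂(s + t)) ^ (1 / p) := by
    refine (Wp_map_comp_le p (r.map x) η hy).trans ?_
    rw [lintegral_map (measurable_assignCost p η hy) hx]
    gcongr
  have hres : residualWp p y (η ∘ₘ a.map x) (η ∘ₘ b.map x) =
      residualWp p y (η ∘ₘ s.map x) (η ∘ₘ t.map x) :=
    residualWp_congr (m := η ∘ₘ m.map x)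
      (by rw [← Measure.comp_add, ← Measure.map_add _ _ hx, ha])
      (by rw [← Measure.comp_add, ← Measure.map_add _ _ hx, hb])
  calc Wp p (s.map x) (t.map x)
      ≤ Wp p (s.map x) ((η ∘ₘ s.map x).map y) + Wp p ((η ∘ₘ s.map x).map y) (t.map x) :=
        Wp_triangle_map_right hp _ _ t hx
    _ ≤ Wp p (s.map x) ((η ∘ₘ s.map x).map y)
          + (Wp p ((η ∘ₘ s.map x).map y) ((η ∘ₘ t.map x).map y)
            + Wp p ((η ∘ₘ t.map x).map y) (t.map x)) := by
        gcongr; exact Wp_triangle_map_right hp _ _ t hx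
    _ ≤ (∫⁻ i, assignCost p η y (x i) ∂(s + t)) ^ (1 / p)
          + (residualWp p y (η ∘ₘ a.map x) (η ∘ₘ b.map x)
            + (∫⁻ i, assignCost p η y (x i) ∂(s + t)) ^ (1 / p)) := by
        rw [hres, Wp_comm p _ (t.map x)]
        gcongr
        exacts [hcost s (Measure.le_add_right le_rfl),
          Wp_map_map_le_residualWp (by positivity) hy _ _, hcost t (Measure.le_add_left le_rfl)]
    _ = _ := by ring

end Residual

section Empirical

variable {E F : Type*} [MeasurableSpace E] [MeasurableSpace F] {n : ℕ}

instance isProbabilityMeasure_empiricalMeasure [NeZero n] (X : Fin n → E) :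
    IsProbabilityMeasure (empiricalMeasure n X) :=
  ⟨by simp [empiricalMeasure, ENNReal.inv_mul_cancel, NeZero.ne n]⟩

instance isProbabilityMeasure_sampleMeasure (μ : Measure E) [IsProbabilityMeasure μ] :
    IsProbabilityMeasure (sampleMeasure μ n) := by
  unfold sampleMeasure; infer_instance

theorem empiricalMeasure_const [NeZero n] (x : E) :
    empiricalMeasure n (fun _ => x) = Measure.dirac x := by
  rw [empiricalMeasure, Finset.sum_const, Finset.card_univ, Fintype.card_fin,
    ← Nat.cast_smul_eq_nsmul ℝ≥0∞, smul_smul,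
    ENNReal.inv_mul_cancel (NeZero.ne _) (by finiteness), one_smul]

theorem map_empiricalMeasure (X : Fin n → E) {f : E → F} (hf : Measurable f) :
    (empiricalMeasure n X).map f = empiricalMeasure n (f ∘ X) := by
  simp [empiricalMeasure, Measure.map_smul, Measure.map_finset_sum' hf.aemeasurable,
    Measure.map_dirac' hf]

theorem lintegral_empiricalMeasure (X : Fin n → E) {f : E → ℝ≥0∞} (hf : Measurable f) :
    ∫⁻ e, f e ∂empiricalMeasure n X = (n : ℝ≥0∞)⁻¹ * ∑ i, f (X i) := by
  simp [empiricalMeasure, lintegral_finsetSum_measure, lintegral_dirac' _ hf]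

theorem measurable_lintegral_empiricalMeasure {f : E → ℝ≥0∞} (hf : Measurable f) :
    Measurable fun X : Fin n → E => ∫⁻ e, f e ∂empiricalMeasure n X := by
  simp_rw [lintegral_empiricalMeasure _ hf]
  fun_prop

theorem lintegral_lintegral_empiricalMeasure [NeZero n] (μ : Measure E) [IsProbabilityMeasure μ]
    {f : E → ℝ≥0∞} (hf : Measurable f) :
    ∫⁻ X, ∫⁻ e, f e ∂empiricalMeasure n X ∂sampleMeasure μ n = ∫⁻ e, f e ∂μ := by
  have heval (i : Fin n) : ∫⁻ X, f (X i) ∂sampleMeasure μ n = ∫⁻ e, f e ∂μ :=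
    (measurePreserving_eval (fun _ : Fin n => μ) i).lintegral_comp hf
  simp_rw [lintegral_empiricalMeasure _ hf]
  rw [lintegral_const_mul _ (by fun_prop), lintegral_finsetSum _ (by fun_prop)]
  simp [heval, ← mul_assoc, ENNReal.inv_mul_cancel, NeZero.ne n]

end Empirical

section Deviation

variable {E Ω : Type*} [MeasurableSpace E] [MeasurableSpace Ω]

theorem tsub_add_tsub_eq_enorm_toReal_sub {a b : ℝ≥0∞} (ha : a ≠ ∞) (hb : b ≠ ∞) :
    (a - b) + (b - a) = ‖a.toReal - b.toReal‖ₑ := by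
  wlog hab : b ≤ a generalizing a b
  · rw [add_comm, this hb ha (le_of_not_ge hab), enorm_sub_rev]
  rw [tsub_eq_zero_of_le hab, add_zero, ← ENNReal.toReal_sub_of_le hab ha,
    Real.enorm_eq_ofReal ENNReal.toReal_nonneg, ENNReal.ofReal_toReal (by finiteness)]

theorem lintegral_enorm_sub_integral_le_evariance (P : Measure Ω) [IsProbabilityMeasure P]
    {Z : Ω → ℝ} (hZ : AEMeasurable Z P) :
    ∫⁻ ω, ‖Z ω - ∫ ω', Z ω' ∂P‖ₑ ∂P ≤ evariance Z P ^ (1 / 2 : ℝ) := by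
  have h := eLpNorm_le_eLpNorm_of_exponent_le (p := 1) (q := 2) (by norm_num)
    (hZ.sub_const (∫ ω', Z ω' ∂P)).aestronglyMeasurable
  rw [eLpNorm_one_eq_lintegral_enorm] at h
  simpa [eLpNorm_eq_lintegral_rpow_enorm_toReal, evariance] using h

theorem variance_le_integral {μ : Measure Ω} [IsProbabilityMeasure μ] {G : Ω → ℝ}
    (hG : AEMeasurable G μ) (h : ∀ᵐ ω ∂μ, G ω ∈ Set.Icc 0 1) : Var[G; μ] ≤ ∫ ω, G ω ∂μ := by
  have := variance_le_sub_mul_sub h hG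
  have h0 : 0 ≤ ∫ ω, G ω ∂μ := integral_nonneg_of_ae (h.mono fun _ hω => hω.1)
  nlinarith

variable {n : ℕ}

theorem variance_empirical_mean (μ : Measure E) [IsProbabilityMeasure μ] {G : E → ℝ}
    (hG : MemLp G 2 μ) :
    Var[fun X => (n : ℝ)⁻¹ * ∑ i, G (X i); sampleMeasure μ n] = Var[G; μ] / n := by
  have hsum : (fun X : Fin n → E => ∑ i, G (X i)) = ∑ i, fun X => G (X i) := by
    ext; simp
  rw [variance_const_mul, hsum, sampleMeasure, variance_sum_pi fun _ => hG]
  simp only [inv_pow, Finset.sum_const, Finset.card_univ, Fintype.card_fin, nsmul_eq_mul]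
  field_simp

theorem lintegral_empiricalMeasure_deviation_le [NeZero n] (μ : Measure E)
    [IsProbabilityMeasure μ] {g : E → ℝ≥0∞} (hg : Measurable g) (hg1 : ∀ e, g e ≤ 1) :
    ∫⁻ X, ((∫⁻ e, g e ∂empiricalMeasure n X - ∫⁻ e, g e ∂μ)
        + (∫⁻ e, g e ∂μ - ∫⁻ e, g e ∂empiricalMeasure n X)) ∂sampleMeasure μ n
      ≤ ((∫⁻ e, g e ∂μ) / n) ^ (1 / 2 : ℝ) := by
  have hfin (ν : Measure E) [IsProbabilityMeasure ν] : ∫⁻ e, g e ∂ν ≠ ∞ :=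
    ne_top_of_le_ne_top one_ne_top ((lintegral_mono hg1).trans_eq (by simp))
  have hg_top (e : E) : g e ≠ ∞ := ne_top_of_le_ne_top one_ne_top (hg1 e)
  have hG (e : E) : (g e).toReal ∈ Set.Icc 0 1 :=
    ⟨ENNReal.toReal_nonneg, ENNReal.toReal_mono one_ne_top (hg1 e)⟩
  have hG_memLp : MemLp (fun e => (g e).toReal) 2 μ :=
    MemLp.of_bound hg.ennreal_toReal.aestronglyMeasurable 1 <| .of_forall fun e => by
      simpa using (hG e).2
  set S : (Fin n → E) → ℝ := fun X => (n : ℝ)⁻¹ * ∑ i, (g (X i)).toReal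
  have hS (X : Fin n → E) : (∫⁻ e, g e ∂empiricalMeasure n X).toReal = S X := by
    simp [S, lintegral_empiricalMeasure X hg, ENNReal.toReal_sum, hg_top]
  have hS_integral : ∫ X, S X ∂sampleMeasure μ n = (∫⁻ e, g e ∂μ).toReal := by
    simp_rw [← hS]
    rw [integral_toReal (measurable_lintegral_empiricalMeasure hg).aemeasurable
      (.of_forall fun X => (hfin _).lt_top), lintegral_lintegral_empiricalMeasure μ hg]
  have hS_memLp : MemLp S 2 (sampleMeasure μ n) :=
    (memLp_finsetSum _ fun i _ => hG_memLp.comp_measurePreserving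
      (measurePreserving_eval (fun _ : Fin n => μ) i)).const_mul _
  have hS_variance : Var[S; sampleMeasure μ n] ≤ (∫⁻ e, g e ∂μ).toReal / n := by
    rw [variance_empirical_mean μ hG_memLp, ← integral_toReal hg.aemeasurable
      (.of_forall fun e => (hg_top e).lt_top)]
    gcongr
    exact variance_le_integral hg.ennreal_toReal.aemeasurable (.of_forall hG)
  calc _ = ∫⁻ X, ‖S X - ∫ X', S X' ∂sampleMeasure μ n‖ₑ ∂sampleMeasure μ n := by
        simp_rw [tsub_add_tsub_eq_enorm_toReal_sub (hfin _) (hfin _), hS, hS_integral]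
    _ ≤ evariance S (sampleMeasure μ n) ^ (1 / 2 : ℝ) :=
        lintegral_enorm_sub_integral_le_evariance _ hS_memLp.aestronglyMeasurable.aemeasurable
    _ ≤ ENNReal.ofReal ((∫⁻ e, g e ∂μ).toReal / n) ^ (1 / 2 : ℝ) := by
        rw [← ofReal_variance hS_memLp]
        gcongr
    _ = _ := by
        rw [ENNReal.ofReal_div_of_pos (by simp [NeZero.pos n]), ENNReal.ofReal_toReal (hfin μ),
          ENNReal.ofReal_natCast]

end Deviation

section Uniform

variable {E : Type*} [MeasurableSpace E] {N : ℕ}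

/-- The uniform distribution on the `N` labels `Fin N`. -/
noncomputable def uniformFin (N : ℕ) : Measure (Fin N) := empiricalMeasure N id

instance isProbabilityMeasure_uniformFin [NeZero N] : IsProbabilityMeasure (uniformFin N) := by
  unfold uniformFin; infer_instance

theorem map_uniformFin (x : Fin N → E) : (uniformFin N).map x = empiricalMeasure N x :=
  map_empiricalMeasure id .of_discrete

theorem uniformFin_singleton (i : Fin N) : uniformFin N {i} = (N : ℝ≥0∞)⁻¹ := by
  simp [uniformFin, empiricalMeasure, Set.indicator_apply]

end Uniform

section KernelDeviation

variable {E ι : Type*} [MeasurableSpace E] [MeasurableSpace ι] [MeasurableSingletonClass ι]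
  {n : ℕ}

theorem comp_apply_singleton (g : Kernel E ι) (ρ : Measure E) (i : ι) :
    (g ∘ₘ ρ) {i} = ∫⁻ e, g e {i} ∂ρ :=
  Measure.bind_apply (measurableSet_singleton i) g.aemeasurable

theorem measurable_comp_empiricalMeasure_singleton (g : Kernel E ι) (i : ι) :
    Measurable fun X : Fin n → E => (g ∘ₘ empiricalMeasure n X) {i} := by
  simp_rw [comp_apply_singleton]
  exact measurable_lintegral_empiricalMeasure (g.measurable_coe (measurableSet_singleton i))

variable [NeZero n]

theorem lintegral_sub_add_sub [Fintype ι] (f : ι → ℝ≥0∞) (a b : Measure ι) [IsFiniteMeasure a]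
    [IsFiniteMeasure b] : ∫⁻ i, f i ∂(a - b + (b - a)) =
      ∑ i, f i * ((a {i} - b {i}) + (b {i} - a {i})) := by
  simp [lintegral_fintype, measure_sub_apply_singleton]

theorem measurable_lintegral_comp_empiricalMeasure_sub [Finite ι] (g : Kernel E ι)
    [IsMarkovKernel g] (b : Measure ι) [IsFiniteMeasure b] (f : ι → ℝ≥0∞) :
    Measurable fun X : Fin n → E =>
      ∫⁻ i, f i ∂(g ∘ₘ empiricalMeasure n X - b + (b - g ∘ₘ empiricalMeasure n X)) := by
  have := Fintype.ofFinite ι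
  have := measurable_comp_empiricalMeasure_singleton (n := n) g
  simp_rw [lintegral_sub_add_sub]
  fun_prop

theorem lintegral_comp_empiricalMeasure_sub_le [Fintype ι] (μ : Measure E)
    [IsProbabilityMeasure μ] (g : Kernel E ι) [IsMarkovKernel g] (f : ι → ℝ≥0∞) :
    ∫⁻ X, ∫⁻ i, f i ∂(g ∘ₘ empiricalMeasure n X - g ∘ₘ μ + (g ∘ₘ μ - g ∘ₘ empiricalMeasure n X))
      ∂sampleMeasure μ n ≤ ∑ i, f i * ((g ∘ₘ μ) {i} / n) ^ (1 / 2 : ℝ) := by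
  have := measurable_comp_empiricalMeasure_singleton (n := n) g
  simp_rw [lintegral_sub_add_sub]
  rw [lintegral_finsetSum _ (by fun_prop)]
  gcongr with i
  rw [lintegral_const_mul _ (by fun_prop)]
  gcongr
  simp_rw [comp_apply_singleton]
  exact lintegral_empiricalMeasure_deviation_le μ (g.measurable_coe (measurableSet_singleton i))
    fun e => prob_le_one

end KernelDeviation

section UniformDeviation

variable {E : Type*} [MeasurableSpace E] {n N : ℕ} [NeZero n] [NeZero N]

theorem lintegral_comp_empiricalMeasure_sub_uniformFin_le {μ : Measure E} [IsProbabilityMeasure μ]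
    {g : Kernel E (Fin N)} [IsMarkovKernel g] (hg : g ∘ₘ μ = uniformFin N) (f : Fin N → ℝ≥0∞) :
    ∫⁻ X, ∫⁻ i, f i ∂(g ∘ₘ empiricalMeasure n X - uniformFin N
        + (uniformFin N - g ∘ₘ empiricalMeasure n X)) ∂sampleMeasure μ n
      ≤ ((N : ℝ≥0∞) / n) ^ (1 / 2 : ℝ) * ∫⁻ i, f i ∂uniformFin N := by
  have hscale : ((N : ℝ≥0∞)⁻¹ / n) ^ (1 / 2 : ℝ) =
      ((N : ℝ≥0∞) / n) ^ (1 / 2 : ℝ) * (N : ℝ≥0∞)⁻¹ := by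
    calc ((N : ℝ≥0∞)⁻¹ / n) ^ (1 / 2 : ℝ)
        = ((N : ℝ≥0∞) / n * (N : ℝ≥0∞)⁻¹ ^ (2 : ℝ)) ^ (1 / 2 : ℝ) := by
          congr 1
          rw [ENNReal.rpow_two, sq, div_eq_mul_inv, div_eq_mul_inv, mul_mul_mul_comm,
            ENNReal.mul_inv_cancel (NeZero.ne _) (by finiteness), one_mul, mul_comm]
      _ = ((N : ℝ≥0∞) / n) ^ (1 / 2 : ℝ) * (N : ℝ≥0∞)⁻¹ := by
          rw [ENNReal.mul_rpow_of_nonneg _ _ (by norm_num), ← ENNReal.rpow_mul]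
          norm_num
  calc _ ≤ ∑ i, f i * ((g ∘ₘ μ) {i} / n) ^ (1 / 2 : ℝ) := by
        rw [← hg]; exact lintegral_comp_empiricalMeasure_sub_le μ g f
    _ = _ := by
        simp_rw [hg, uniformFin_singleton, hscale, lintegral_fintype, uniformFin_singleton]
        rw [Finset.mul_sum]
        exact Finset.sum_congr rfl fun i _ => by ring

end UniformDeviation

section Chaining

variable {E : Type*} [MetricSpace E] [MeasurableSpace E] [SecondCountableTopology E]
  [BorelSpace E] {p : ℝ} {μ : Measure E} [IsProbabilityMeasure μ] {n : ℕ} [NeZero n]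

theorem lintegral_residualWp_le_add (hp : 1 ≤ p) {κ : Type*} [MeasurableSpace κ] {N : ℕ} [NeZero N]
    {g : Kernel E (Fin N)} [IsMarkovKernel g] (hg : g ∘ₘ μ = uniformFin N) (x : Fin N → E)
    (η : Kernel E κ) [IsMarkovKernel η] {y : κ → E} (hy : Measurable y) :
    (∫⁻ X, residualWp p x (g ∘ₘ empiricalMeasure n X) (uniformFin N) ^ p
        ∂sampleMeasure μ n) ^ (1 / p) ≤
      2 * (((N : ℝ≥0∞) / n) ^ (1 / (2 * p)) *
          (∫⁻ e, assignCost p η y e ∂empiricalMeasure N x) ^ (1 / p))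
        + (∫⁻ X, residualWp p y ((η ∘ₖ g.map x) ∘ₘ empiricalMeasure n X)
            (η ∘ₘ empiricalMeasure N x) ^ p ∂sampleMeasure μ n) ^ (1 / p) := by
  have hp0 : 0 < p := by positivity
  have hx : Measurable x := .of_discrete
  set cost : (Fin n → E) → ℝ≥0∞ := fun X => ∫⁻ i, assignCost p η y (x i)
    ∂(g ∘ₘ empiricalMeasure n X - uniformFin N + (uniformFin N - g ∘ₘ empiricalMeasure n X))
  have hcost_meas : Measurable cost := measurable_lintegral_comp_empiricalMeasure_sub g _ _
  have hcost : ∫⁻ X, cost X ∂sampleMeasure μ n ≤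
      ((N : ℝ≥0∞) / n) ^ (1 / 2 : ℝ) * ∫⁻ e, assignCost p η y e ∂empiricalMeasure N x := by
    rw [← map_uniformFin x, lintegral_map (measurable_assignCost p η hy) hx]
    exact lintegral_comp_empiricalMeasure_sub_uniformFin_le hg _
  have hstep (X : Fin n → E) : residualWp p x (g ∘ₘ empiricalMeasure n X) (uniformFin N) ≤
      2 * cost X ^ (1 / p) + residualWp p y ((η ∘ₖ g.map x) ∘ₘ empiricalMeasure n X)
        (η ∘ₘ empiricalMeasure N x) := by
    rw [← Measure.comp_assoc, ← Measure.map_comp _ _ hx, ← map_uniformFin x]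
    exact residualWp_le_add hp hx hy η _ _
  refine (ENNReal.rpow_le_rpow (lintegral_mono fun X => ENNReal.rpow_le_rpow (hstep X) hp0.le)
    (by positivity)).trans ?_
  refine (lintegral_Lp_add_le_of_measurable_left hp (by fun_prop) _).trans ?_
  rw [lintegral_const_mul_rpow_one_div_rpow hp0 _ _ hcost_meas]
  gcongr
  refine (ENNReal.rpow_le_rpow hcost (by positivity)).trans_eq ?_
  rw [ENNReal.mul_rpow_of_nonneg _ _ (by positivity), ← ENNReal.rpow_mul]
  congr 2
  field_simp

variable {N : ℕ → ℕ} [∀ k, NeZero (N k)] {x : ∀ k, Fin (N k) → E} {c : ℕ → ℝ≥0∞}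
  {η : ∀ k, Kernel E (Fin (N k))} [∀ k, IsMarkovKernel (η k)]

theorem lintegral_residualWp_le_sum (hp : 1 ≤ p) (hN : N 0 = 1)
    (hη : ∀ k, η k ∘ₘ empiricalMeasure (N (k + 1)) (x (k + 1)) = uniformFin (N k))
    (hc : ∀ k, (∫⁻ e, assignCost p (η k) (x k) e
      ∂empiricalMeasure (N (k + 1)) (x (k + 1))) ^ (1 / p) ≤ c k)
    (K : ℕ) {g : Kernel E (Fin (N K))} [IsMarkovKernel g] (hg : g ∘ₘ μ = uniformFin (N K)) :
    (∫⁻ X, residualWp p (x K) (g ∘ₘ empiricalMeasure n X) (uniformFin (N K)) ^ p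
        ∂sampleMeasure μ n) ^ (1 / p) ≤
      ∑ k ∈ Finset.range K, 2 * (((N (k + 1) : ℝ≥0∞) / n) ^ (1 / (2 * p)) * c k) := by
  have hp0 : 0 < p := by positivity
  induction K with
  | zero =>
    have : Subsingleton (Fin (N 0)) := hN ▸ inferInstance
    have heq (X : Fin n → E) : g ∘ₘ empiricalMeasure n X = uniformFin (N 0) := by
      ext s
      induction s using Subsingleton.set_cases <;> simp
    simp [heq, residualWp_self, hp0]
  | succ K ih =>
    have hx : Measurable (x (K + 1)) := .of_discrete
    have hnext : (η K ∘ₖ g.map (x (K + 1))) ∘ₘ μ = uniformFin (N K) := by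
      rw [← Measure.comp_assoc, ← Measure.map_comp _ _ hx, hg, map_uniformFin, hη]
    have : IsMarkovKernel (g.map (x (K + 1))) := Kernel.IsMarkovKernel.map g hx
    refine (lintegral_residualWp_le_add hp hg _ (η K) (y := x K) .of_discrete).trans ?_
    rw [hη, Finset.sum_range_succ, add_comm]
    gcongr
    exacts [ih hnext, hc K]

end Chaining

section Bound

variable {E : Type*} [MetricSpace E] [MeasurableSpace E] [SecondCountableTopology E]
  [BorelSpace E] {p : ℝ} {μ : Measure E} {n : ℕ} [NeZero n]

theorem Wp_empiricalMeasure_le (hp : 1 ≤ p) {N : ℕ} [NeZero N] (x : Fin N → E)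
    (g : Kernel E (Fin N)) [IsMarkovKernel g] (X : Fin n → E) :
    Wp p (empiricalMeasure n X) μ ≤
      (∫⁻ e, assignCost p g x e ∂empiricalMeasure n X) ^ (1 / p)
        + (Wp p μ (empiricalMeasure N x)
          + residualWp p x (g ∘ₘ empiricalMeasure n X) (uniformFin N)) := by
  have hx : Measurable x := .of_discrete
  calc Wp p (empiricalMeasure n X) μ
      ≤ Wp p (empiricalMeasure n X) (empiricalMeasure N x) + Wp p (empiricalMeasure N x) μ := by
        rw [← map_uniformFin X]; exact Wp_triangle_map_left hp _ .of_discrete _ _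
    _ ≤ (Wp p (empiricalMeasure n X) ((g ∘ₘ empiricalMeasure n X).map x)
          + Wp p ((g ∘ₘ empiricalMeasure n X).map x) (empiricalMeasure N x))
          + Wp p μ (empiricalMeasure N x) := by
        rw [Wp_comm p _ μ, ← map_uniformFin x]
        gcongr
        exact Wp_triangle_map_right hp _ _ _ hx
    _ ≤ ((∫⁻ e, assignCost p g x e ∂empiricalMeasure n X) ^ (1 / p)
          + residualWp p x (g ∘ₘ empiricalMeasure n X) (uniformFin N))
          + Wp p μ (empiricalMeasure N x) := by
        gcongr
        · exact Wp_map_comp_le p _ g hx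
        · rw [← map_uniformFin x]
          exact Wp_map_map_le_residualWp (by positivity) hx _ _
    _ = _ := by ring

variable [IsProbabilityMeasure μ]

theorem expWpPow_le_add_lintegral_residualWp (hp : 1 ≤ p) {N : ℕ} [NeZero N] (x : Fin N → E)
    (g : Kernel E (Fin N)) [IsMarkovKernel g] :
    expWpPow p μ n ≤ (∫⁻ e, assignCost p g x e ∂μ) ^ (1 / p) + (Wp p μ (empiricalMeasure N x)
      + (∫⁻ X, residualWp p x (g ∘ₘ empiricalMeasure n X) (uniformFin N) ^ p
          ∂sampleMeasure μ n) ^ (1 / p)) := by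
  have hp0 : 0 < p := by positivity
  have hcost := measurable_assignCost p g (.of_discrete : Measurable x)
  have hcost_mean := measurable_lintegral_empiricalMeasure (n := n) hcost
  refine (ENNReal.rpow_le_rpow (lintegral_mono fun X => ENNReal.rpow_le_rpow
    (Wp_empiricalMeasure_le hp x g X) hp0.le) (by positivity)).trans ?_
  refine (lintegral_Lp_add_le_of_measurable_left hp (by fun_prop) _).trans ?_
  gcongr
  · simp_rw [← ENNReal.rpow_mul, one_div_mul_cancel hp0.ne', ENNReal.rpow_one]
    rw [lintegral_lintegral_empiricalMeasure μ hcost]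
  · refine (lintegral_Lp_add_le_of_measurable_left hp measurable_const _).trans_eq ?_
    simp [← ENNReal.rpow_mul, hp0.ne']

theorem expWpPow_le_of_unifQuantErr_lt (hp : 1 ≤ p) {N : ℕ → ℕ} [∀ k, NeZero (N k)]
    (hN : N 0 = 1) {β : ℕ → ℝ≥0∞} (hβ : ∀ k, unifQuantErr p (N k) μ < β k) (K : ℕ) :
    expWpPow p μ n ≤ 2 * β K +
      ∑ k ∈ Finset.range K, 2 * (((N (k + 1) : ℝ≥0∞) / n) ^ (1 / (2 * p)) * (β (k + 1) + β k)) := by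
  choose x hx using fun k => iInf_lt_iff.1 (hβ k)
  have hstep (k : ℕ) : Wp p (empiricalMeasure (N (k + 1)) (x (k + 1)))
      ((uniformFin (N k)).map (x k)) < β (k + 1) + β k := by
    refine (Wp_triangle_map_right hp _ μ _ .of_discrete).trans_lt ?_
    rw [Wp_comm p _ μ, map_uniformFin]
    exact ENNReal.add_lt_add (hx (k + 1)) (hx k)
  choose η hη_markov hη hη_cost using fun k => exists_assignCost_lt_of_Wp_lt .of_discrete (hstep k)
  obtain ⟨g, _, hg, hg_cost⟩ := exists_assignCost_lt_of_Wp_lt .of_discrete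
    ((map_uniformFin (x K)).symm ▸ hx K)
  calc expWpPow p μ n
      ≤ β K + (β K + (∫⁻ X, residualWp p (x K) (g ∘ₘ empiricalMeasure n X) (uniformFin (N K)) ^ p
          ∂sampleMeasure μ n) ^ (1 / p)) := by
        refine (expWpPow_le_add_lintegral_residualWp hp (x K) g).trans ?_
        gcongr
        exact (hx K).le
    _ ≤ β K + (β K + ∑ k ∈ Finset.range K,
          2 * (((N (k + 1) : ℝ≥0∞) / n) ^ (1 / (2 * p)) * (β (k + 1) + β k))) := by
        gcongr
        exact lintegral_residualWp_le_sum hp hN hη (fun k => (hη_cost k).le) K hg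
    _ = _ := by ring

theorem unifQuantErr_ne_top (hp : 0 < p) (hμ : HasFiniteMoment p μ) : unifQuantErr p n μ ≠ ∞ := by
  obtain ⟨x₀, hx₀⟩ := hμ
  refine ne_top_of_le_ne_top (ENNReal.rpow_ne_top_of_nonneg (one_div_nonneg.2 hp.le) hx₀) ?_
  calc unifQuantErr p n μ
      ≤ Wp p μ (empiricalMeasure n fun _ => x₀) := iInf_le _ _
    _ = Wp p (μ.map id) (μ.map fun _ => x₀) := by
        rw [empiricalMeasure_const, Measure.map_id, Measure.map_const, measure_univ, one_smul]
    _ ≤ (∫⁻ e, edist e x₀ ^ p ∂μ) ^ (1 / p) := Wp_map_map_le p μ measurable_id measurable_const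

end Bound

section Rate

theorem two_mul_two_mul_rpow_le {s : ℝ} (h₀ : 0 ≤ s) (hs : s ≤ 1 / 2) (a : ℝ≥0∞) :
    2 * (2 * a) ^ s ≤ 3 * a ^ s := by
  have htwo : 2 * (2 : ℝ≥0∞) ^ s ≤ 3 :=
    calc 2 * (2 : ℝ≥0∞) ^ s ≤ 2 * 2 ^ (1 / 2 : ℝ) := by gcongr; exact one_le_two
      _ = (8 : ℝ≥0∞) ^ (1 / 2 : ℝ) := by
        rw [show (8 : ℝ≥0∞) = 2 ^ (2 : ℝ) * 2 by norm_num,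
          ENNReal.mul_rpow_of_nonneg _ _ (by norm_num), ← ENNReal.rpow_mul]
        norm_num
      _ ≤ (3 ^ (2 : ℝ)) ^ (1 / 2 : ℝ) := by gcongr; norm_num
      _ = 3 := by rw [← ENNReal.rpow_mul]; norm_num
  rw [ENNReal.mul_rpow_of_nonneg _ _ h₀, ← mul_assoc]
  gcongr

-- Of the five copies of `r k * β k`, two pay for the link between scales `k` and `k - 1`, and three
-- for the link between scales `k + 1` and `k`, since `2 * r (k + 1) ≤ 3 * r k`.
theorem add_sum_le_five_mul_sum {r : ℕ → ℝ≥0∞} (hr : ∀ k, 2 * r (k + 1) ≤ 3 * r k)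
    (β : ℕ → ℝ≥0∞) (K : ℕ) :
    3 * (r K * β K) + ∑ k ∈ Finset.range K, 2 * (r (k + 1) * (β (k + 1) + β k))
      ≤ 5 * ∑ k ∈ Finset.range (K + 1), r k * β k := by
  induction K with
  | zero =>
    simp only [Finset.range_zero, Finset.sum_empty, add_zero, zero_add, Finset.range_one,
      Finset.sum_singleton]
    gcongr
    norm_num
  | succ K ih =>
    rw [Finset.sum_range_succ, Finset.sum_range_succ _ (K + 1), mul_add 5]
    calc _ = 2 * r (K + 1) * β K + ∑ k ∈ Finset.range K, 2 * (r (k + 1) * (β (k + 1) + β k))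
          + 5 * (r (K + 1) * β (K + 1)) := by ring
      _ ≤ 3 * r K * β K + ∑ k ∈ Finset.range K, 2 * (r (k + 1) * (β (k + 1) + β k))
          + 5 * (r (K + 1) * β (K + 1)) := by gcongr ?_ * β K + _ + _; exact hr K
      _ ≤ _ := by rw [mul_assoc 3]; gcongr

theorem le_mul_sum_mul_of_forall_lt {ι : Type*} {s : Finset ι} {a c : ℝ≥0∞} {r b : ι → ℝ≥0∞}
    (hc : c ≠ ∞) (hr : ∀ i, r i ≠ ∞) (hb : ∀ i, b i ≠ ∞)
    (h : ∀ β : ι → ℝ≥0∞, (∀ i, b i < β i) → a ≤ c * ∑ i ∈ s, r i * β i) :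
    a ≤ c * ∑ i ∈ s, r i * b i := by
  have hlim : Tendsto (fun ε : ℝ≥0∞ => c * ∑ i ∈ s, r i * (b i + ε)) (nhdsWithin 0 (Set.Ioi 0))
      (nhds (c * ∑ i ∈ s, r i * (b i + 0))) :=
    tendsto_nhdsWithin_of_tendsto_nhds <| ENNReal.Tendsto.const_mul
      (tendsto_finsetSum _ fun i _ =>
        ENNReal.Tendsto.const_mul (tendsto_const_nhds.add tendsto_id) (.inr (hr i))) (.inr hc)
  simp only [add_zero] at hlim
  exact ge_of_tendsto hlim <| eventually_nhdsWithin_of_forall fun ε hε =>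
    h _ fun i => ENNReal.lt_add_right (hb i) (ne_of_gt hε)

variable {E : Type*} [MetricSpace E] [MeasurableSpace E] [SecondCountableTopology E]
  [BorelSpace E] {p : ℝ} {μ : Measure E} [IsProbabilityMeasure μ] {n : ℕ} [NeZero n]

theorem expWpPow_le_five_mul_sum (hp : 1 ≤ p) {β : ℕ → ℝ≥0∞}
    (hβ : ∀ k, unifQuantErr p (2 ^ k) μ < β k) :
    expWpPow p μ n ≤ 5 * ∑ k ∈ Finset.range (Nat.log 2 n + 1),
      ((2 : ℝ≥0∞) ^ k / n) ^ (1 / (2 * p)) * β k := by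
  set K := Nat.log 2 n
  set r : ℕ → ℝ≥0∞ := fun k => ((2 : ℝ≥0∞) ^ k / n) ^ (1 / (2 * p)) with hr_def
  have hs₀ : 0 ≤ 1 / (2 * p) := by positivity
  have hs : 1 / (2 * p) ≤ 1 / 2 := by gcongr; linarith
  have hdouble (k : ℕ) : (2 : ℝ≥0∞) ^ (k + 1) / n = 2 * (2 ^ k / n) := by
    rw [pow_succ', mul_div_assoc]
  have hr (k : ℕ) : 2 * r (k + 1) ≤ 3 * r k := by
    simp only [hr_def, hdouble]
    exact two_mul_two_mul_rpow_le hs₀ hs _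
  have hlast : 1 ≤ r (K + 1) := by
    refine ENNReal.one_le_rpow ?_ (by positivity)
    rw [ENNReal.le_div_iff_mul_le (.inl (NeZero.ne _)) (.inl (by finiteness)), one_mul]
    exact_mod_cast (Nat.lt_pow_succ_log_self one_lt_two n).le
  calc expWpPow p μ n
      ≤ 2 * β K + ∑ k ∈ Finset.range K, 2 * (r (k + 1) * (β (k + 1) + β k)) := by
        simpa [r] using expWpPow_le_of_unifQuantErr_lt (N := fun k => 2 ^ k) hp rfl hβ K
    _ ≤ 2 * r (K + 1) * β K + ∑ k ∈ Finset.range K, 2 * (r (k + 1) * (β (k + 1) + β k)) := by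
        gcongr; exact le_mul_of_one_le_right' hlast
    _ ≤ 3 * (r K * β K) + ∑ k ∈ Finset.range K, 2 * (r (k + 1) * (β (k + 1) + β k)) := by
        rw [← mul_assoc 3]; gcongr ?_ * β K + _; exact hr K
    _ ≤ _ := add_sum_le_five_mul_sum hr β K

end Rate

/-- **Theorem (main2).** Let `(E, d_E)` be a separable metric space, `p ≥ 1`,
`μ ∈ 𝒫_p(E)` and `n ∈ ℕ`. Then
`(𝔼[W_p(μ_n, μ)^p])^{1/p} ≤ 5 · ∑_{k=0}^{⌊log₂ n⌋} (2^k/n)^{1/(2p)} · b_{2^k,p}(μ)`. -/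
theorem stmt_1 {E : Type*} [MetricSpace E] [TopologicalSpace.SeparableSpace E]
    [MeasurableSpace E] [BorelSpace E]
    (p : ℝ) (hp : 1 ≤ p)
    (μ : Measure E) [IsProbabilityMeasure μ] (hμ : HasFiniteMoment p μ)
    (n : ℕ) (hn : 1 ≤ n) :
    expWpPow p μ n ≤ 5 * ∑ k ∈ Finset.range (Nat.log 2 n + 1),
        ENNReal.ofReal (((2 : ℝ) ^ k / n) ^ (1 / (2 * p))) * unifQuantErr p (2 ^ k) μ := by
  have : SecondCountableTopology E := UniformSpace.secondCountable_of_separable E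
  have : NeZero n := ⟨by omega⟩
  have hn₀ : (0 : ℝ) < n := by exact_mod_cast hn
  have hrate (k : ℕ) : ENNReal.ofReal (((2 : ℝ) ^ k / n) ^ (1 / (2 * p))) =
      ((2 : ℝ≥0∞) ^ k / n) ^ (1 / (2 * p)) := by
    rw [← ENNReal.ofReal_rpow_of_pos (by positivity), ENNReal.ofReal_div_of_pos hn₀,
      ENNReal.ofReal_pow (by norm_num), ENNReal.ofReal_ofNat, ENNReal.ofReal_natCast]
  refine le_mul_sum_mul_of_forall_lt (by finiteness) (fun k => by finiteness)
    (fun k => unifQuantErr_ne_top (by positivity) hμ) fun β hβ => ?_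
  simp only [hrate]
  exact expWpPow_le_five_mul_sum hp hβ
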